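/- arXiv:2209.11501 — 2 statements merged into one kernel-verified Lean document; each statement's English description precedes it below -/
import Mathlib

section
/- Let a ≥ 0, b > 0, R > 0, and let L ≥ 1 be an integer. Define the Type-I HARQ outage probability P(ρ) = (e^{-a} · Σ_{i=0}^∞ (a^i/i!) · γ(1+i, (2^R−1)/(ρb))/Γ(1+i))^L for ρ > 0. Then the diversity order equals L, i.e., lim_{ρ → ∞} (− log P(ρ) / log ρ) = L. -/
open Filter

/-- The lower incomplete gamma function `γ(s, x) = ∫₀^x t^{s-1} e^{-t} dt`. -/
noncomputable def lincGamma (s x : ℝ) : ℝ :=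
  ∫ t in (0:ℝ)..x, t ^ (s - 1) * Real.exp (-t)

/-
Let `v` be the second argument of `γ` in the series. The term of index `i` vanishes at `v = 0` and
has derivative `(a^i / i!) (v^i / i!) e^{-v}`, so the series vanishes at `0` with derivative `1`:
only the term `i = 0` contributes to first order. Substituting `v = c / ρ` with
`c = (2^R - 1) / b` therefore gives `P(ρ) ρ^L → (e^{-a} c)^L ≠ 0`, and a function of order exactly
`ρ^{-L}` has diversity order `L`.
-/

open Topology

section DiversityOrder

/-- `P` has diversity order `d` as a function of the average SNR `ρ`: `-log P(ρ) / log ρ → d` as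
`ρ → ∞`. -/
def HasDiversityOrder (P : ℝ → ℝ) (d : ℝ) : Prop :=
  Tendsto (fun ρ : ℝ => -Real.log (P ρ) / Real.log ρ) atTop (𝓝 d)

theorem hasDiversityOrder_of_tendsto_mul_rpow {P : ℝ → ℝ} {d C : ℝ} (hC : C ≠ 0)
    (h : Tendsto (fun ρ => P ρ * ρ ^ d) atTop (𝓝 C)) : HasDiversityOrder P d := by
  have hlog : Tendsto (fun ρ => d - Real.log (P ρ * ρ ^ d) / Real.log ρ) atTop (𝓝 d) := by
    simpa using ((h.log hC).div_atTop Real.tendsto_log_atTop).const_sub d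
  refine hlog.congr' ?_
  filter_upwards [h.eventually_ne hC, eventually_gt_atTop 1] with ρ hne hρ
  have hρ_log : Real.log ρ ≠ 0 := (Real.log_pos hρ).ne'
  rw [Real.log_mul (left_ne_zero_of_mul hne) (right_ne_zero_of_mul hne),
    Real.log_rpow (zero_lt_one.trans hρ)]
  field_simp
  ring

theorem tendsto_comp_const_div_mul_atTop_of_hasDerivAt {f : ℝ → ℝ} {m c : ℝ}
    (hf : HasDerivAt f m 0) (hf0 : f 0 = 0) (hc : c ≠ 0) :
    Tendsto (fun ρ => f (c / ρ) * ρ) atTop (𝓝 (m * c)) := by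
  have hlim : Tendsto (fun ρ : ℝ => c / ρ) atTop (𝓝[≠] 0) :=
    tendsto_nhdsWithin_iff.2 ⟨tendsto_const_nhds.div_atTop tendsto_id,
      (eventually_ne_atTop 0).mono fun ρ hρ => div_ne_zero hc hρ⟩
  have hslope := (hf.tendsto_slope_zero.comp hlim).mul_const c
  refine hslope.congr' ?_
  filter_upwards [eventually_ne_atTop 0] with ρ hρ
  simp only [Function.comp_apply, zero_add, hf0, sub_zero, smul_eq_mul]
  field_simp

end DiversityOrder

section GammaMixture

theorem lincGamma_zero_right (s : ℝ) : lincGamma s 0 = 0 :=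
  intervalIntegral.integral_same

theorem hasDerivAt_lincGamma {s : ℝ} (hs : 1 ≤ s) (v : ℝ) :
    HasDerivAt (lincGamma s) (v ^ (s - 1) * Real.exp (-v)) v := by
  have hcont : Continuous fun t : ℝ => t ^ (s - 1) * Real.exp (-t) :=
    (Real.continuous_rpow_const (sub_nonneg.2 hs)).mul (by fun_prop)
  exact (hcont.integral_hasStrictDerivAt 0 v).hasDerivAt

theorem hasDerivAt_lincGamma_one_add_natCast_div_Gamma (i : ℕ) (v : ℝ) :
    HasDerivAt (fun x => lincGamma (1 + i) x / Real.Gamma (1 + i))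
      (v ^ i / i.factorial * Real.exp (-v)) v := by
  have h := (hasDerivAt_lincGamma (s := 1 + i) (by simp) v).div_const (Real.Gamma (1 + i))
  have hΓ : Real.Gamma (1 + i) = i.factorial := by
    rw [add_comm, Real.Gamma_nat_eq_factorial]
  rw [← hΓ]
  rwa [add_sub_cancel_left, Real.rpow_natCast, mul_div_right_comm] at h

theorem abs_pow_div_factorial_mul_exp_neg_le {v r : ℝ} (hv : |v| ≤ r) (i : ℕ) :
    |v ^ i / i.factorial * Real.exp (-v)| ≤ Real.exp r * Real.exp r := by
  rw [abs_mul, abs_div, abs_pow, Nat.abs_cast, Real.abs_exp]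
  gcongr
  · exact (Real.pow_div_factorial_le_exp |v| (abs_nonneg v) i).trans (Real.exp_le_exp.2 hv)
  · exact (neg_le_abs v).trans hv

/-- The mixture `∑ᵢ wᵢ γ(1 + i, v) / Γ(1 + i)` of the cumulative distribution functions of the
Gamma laws of shape `1 + i` and rate `1`. For Poisson weights `wᵢ = e^{-a} aⁱ / i!` it is the outage
probability of one transmission. The weights are arbitrary reals. -/
noncomputable def gammaMixture (w : ℕ → ℝ) (v : ℝ) : ℝ :=
  ∑' i : ℕ, w i * (lincGamma (1 + i) v / Real.Gamma (1 + i))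

theorem gammaMixture_zero_right (w : ℕ → ℝ) : gammaMixture w 0 = 0 := by
  simp [gammaMixture, lincGamma_zero_right]

variable {w : ℕ → ℝ}

theorem hasDerivAt_gammaMixture (hw : Summable w) (v : ℝ) :
    HasDerivAt (gammaMixture w) (∑' i, w i * (v ^ i / i.factorial * Real.exp (-v))) v := by
  set r := |v| + 1
  refine hasDerivAt_tsum_of_isPreconnected (t := Metric.ball 0 r) (y₀ := 0)
    (hw.abs.mul_right (Real.exp r * Real.exp r)) Metric.isOpen_ball
    (convex_ball 0 r).isPreconnected
    (fun i x _ => (hasDerivAt_lincGamma_one_add_natCast_div_Gamma i x).const_mul (w i)) ?_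
    (Metric.mem_ball_self (by positivity)) ?_ (by simp [r])
  · intro i x hx
    rw [Real.norm_eq_abs, abs_mul]
    gcongr
    exact abs_pow_div_factorial_mul_exp_neg_le (mem_ball_zero_iff.1 hx).le i
  · simp [lincGamma_zero_right, summable_zero]

theorem hasDerivAt_gammaMixture_zero (hw : Summable w) : HasDerivAt (gammaMixture w) (w 0) 0 := by
  convert hasDerivAt_gammaMixture hw 0
  rw [tsum_eq_single 0 fun i hi => by simp [hi]]
  simp

theorem hasDiversityOrder_gammaMixture_const_div_pow (hw : Summable w) (hw0 : w 0 ≠ 0) {c : ℝ}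
    (hc : c ≠ 0) (L : ℕ) : HasDiversityOrder (fun ρ => gammaMixture w (c / ρ) ^ L) L := by
  refine hasDiversityOrder_of_tendsto_mul_rpow (pow_ne_zero L (mul_ne_zero hw0 hc)) ?_
  simpa only [mul_pow, Real.rpow_natCast] using
    (tendsto_comp_const_div_mul_atTop_of_hasDerivAt (hasDerivAt_gammaMixture_zero hw)
      (gammaMixture_zero_right w) hc).pow L

end GammaMixture

theorem typeI_diversity_order_general {a b R : ℝ} (hb : 0 < b) (hR : 0 < R) (L : ℕ) {P : ℝ → ℝ}
    (hP : ∀ ρ, 0 < ρ → P ρ = (Real.exp (-a) *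
      ∑' i : ℕ, a ^ i / (Nat.factorial i) *
        (lincGamma (1 + i) (((2 : ℝ) ^ R - 1) / (ρ * b)) / Real.Gamma (1 + i))) ^ L) :
    HasDiversityOrder P L := by
  have hw : Summable fun i : ℕ => Real.exp (-a) * (a ^ i / i.factorial) :=
    (Real.summable_pow_div_factorial a).mul_left _
  have hc : ((2 : ℝ) ^ R - 1) / b ≠ 0 :=
    (div_pos (sub_pos.2 (Real.one_lt_rpow one_lt_two hR)) hb).ne'
  refine (hasDiversityOrder_gammaMixture_const_div_pow hw (by simp) hc L).congr' ?_
  filter_upwards [eventually_gt_atTop 0] with ρ hρ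
  rw [hP ρ hρ, gammaMixture, div_div, mul_comm b ρ, ← tsum_mul_left]
  simp only [mul_assoc]

/-- The Type-I HARQ scheme achieves full diversity order `L`: with outage probability
`P(ρ) = (e^{-a} ∑_{i=0}^∞ (a^i/i!) γ(1+i, (2^R−1)/(ρb))/Γ(1+i))^L`,
one has `−log P(ρ)/log ρ → L` as `ρ → ∞`. -/
theorem typeI_diversity_order (a b R : ℝ) (ha : 0 ≤ a) (hb : 0 < b) (hR : 0 < R)
    (L : ℕ) (hL : 1 ≤ L)
    (P : ℝ → ℝ)
    (hP : ∀ ρ, 0 < ρ → P ρ = (Real.exp (-a) *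
      ∑' i : ℕ, a ^ i / (Nat.factorial i) *
        (lincGamma (1 + i) (((2 : ℝ) ^ R - 1) / (ρ * b)) / Real.Gamma (1 + i))) ^ L) :
    Tendsto (fun ρ : ℝ => -Real.log (P ρ) / Real.log ρ) atTop (nhds (L : ℝ)) :=
  typeI_diversity_order_general hb hR L hP
end

section
/- Let ξ ≥ 0, b > 0, R > 0, and let L ≥ 1 be an integer. Define the HARQ-CC outage probability P(ρ) = e^{-ξ} · Σ_{i=0}^∞ (ξ^i/i!) · γ(L+i, (2^R−1)/(ρb))/Γ(L+i) for ρ > 0. Then the diversity order equals L, i.e., lim_{ρ → ∞} (− log P(ρ) / log ρ) = L. -/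
open Filter

/-!
As `v → 0⁺`, the factor `e^{-t}` in `γ(s, v)` tends to `1` uniformly on `[0, v]`, so
`γ(s, v) / Γ(s) ∼ v ^ s / Γ(s + 1)`. In the Poisson mixture of the functions
`γ(s + i, v) / Γ(s + i)` only the term `i = 0` is of order `v ^ s`, and dominated convergence for
series shows that the mixture is `∼ e^{-ξ} v ^ s / Γ(s + 1)`. Substituting `v = c / ρ` gives
`P(ρ) ρ ^ s → C > 0`, and taking logarithms gives the diversity order `s`.
-/

open Topology

section IncompleteGamma

variable {s v : ℝ}

lemma intervalIntegrable_rpow_sub_one (hs : 0 < s) :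
    IntervalIntegrable (fun t : ℝ => t ^ (s - 1)) MeasureTheory.volume 0 v :=
  intervalIntegral.intervalIntegrable_rpow' (by linarith)

lemma intervalIntegrable_rpow_mul_exp_neg (hs : 0 < s) :
    IntervalIntegrable (fun t : ℝ => t ^ (s - 1) * Real.exp (-t)) MeasureTheory.volume 0 v :=
  (intervalIntegrable_rpow_sub_one hs).mul_continuousOn (by fun_prop)

lemma integral_rpow_sub_one (hs : 0 < s) : ∫ t in (0 : ℝ)..v, t ^ (s - 1) = v ^ s / s := by
  rw [integral_rpow (Or.inl (by linarith)), sub_add_cancel, Real.zero_rpow hs.ne', sub_zero]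

lemma lincGamma_nonneg (hv : 0 ≤ v) : 0 ≤ lincGamma s v :=
  intervalIntegral.integral_nonneg hv fun _ ht =>
    mul_nonneg (Real.rpow_nonneg ht.1 _) (Real.exp_nonneg _)

lemma lincGamma_le (hs : 0 < s) (hv : 0 ≤ v) : lincGamma s v ≤ v ^ s / s := by
  rw [← integral_rpow_sub_one hs]
  refine intervalIntegral.integral_mono_on hv (intervalIntegrable_rpow_mul_exp_neg hs)
    (intervalIntegrable_rpow_sub_one hs) fun t ht => ?_
  exact mul_le_of_le_one_right (Real.rpow_nonneg ht.1 _)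
    (Real.exp_le_one_iff.mpr (neg_nonpos.mpr ht.1))

lemma le_lincGamma (hs : 0 < s) (hv : 0 ≤ v) : v ^ s / s * Real.exp (-v) ≤ lincGamma s v := by
  rw [← integral_rpow_sub_one hs, ← intervalIntegral.integral_mul_const]
  refine intervalIntegral.integral_mono_on hv
    ((intervalIntegrable_rpow_sub_one hs).mul_const _)
    (intervalIntegrable_rpow_mul_exp_neg hs) fun t ht => ?_
  exact mul_le_mul_of_nonneg_left (Real.exp_le_exp.mpr (neg_le_neg ht.2))
    (Real.rpow_nonneg ht.1 _)

lemma lincGamma_div_Gamma_le (hs : 0 < s) (hv : 0 ≤ v) :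
    lincGamma s v / Real.Gamma s ≤ v ^ s / Real.Gamma (s + 1) := by
  rw [Real.Gamma_add_one hs.ne', ← div_div]
  exact div_le_div_of_nonneg_right (lincGamma_le hs hv) (Real.Gamma_pos_of_pos hs).le

lemma le_lincGamma_div_Gamma (hs : 0 < s) (hv : 0 ≤ v) :
    v ^ s / Real.Gamma (s + 1) * Real.exp (-v) ≤ lincGamma s v / Real.Gamma s := by
  rw [Real.Gamma_add_one hs.ne', ← div_div, div_mul_eq_mul_div]
  exact div_le_div_of_nonneg_right (le_lincGamma hs hv) (Real.Gamma_pos_of_pos hs).le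

lemma tendsto_lincGamma_div_Gamma_div_rpow (hs : 0 < s) :
    Tendsto (fun v => lincGamma s v / Real.Gamma s / v ^ s) (𝓝[>] 0)
      (𝓝 (Real.Gamma (s + 1))⁻¹) := by
  have lower_limit : Tendsto (fun v => (Real.Gamma (s + 1))⁻¹ * Real.exp (-v)) (𝓝[>] 0)
      (𝓝 (Real.Gamma (s + 1))⁻¹) := by
    refine tendsto_nhdsWithin_of_tendsto_nhds (Continuous.tendsto' (by fun_prop) _ _ ?_)
    rw [neg_zero, Real.exp_zero, mul_one]
  refine tendsto_of_tendsto_of_tendsto_of_le_of_le' lower_limit tendsto_const_nhds ?_ ?_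
  all_goals
    filter_upwards [self_mem_nhdsWithin] with v (hv : 0 < v)
    have hvs : 0 < v ^ s := Real.rpow_pos_of_pos hv s
  · rw [le_div_iff₀ hvs, mul_right_comm, inv_mul_eq_div]
    exact le_lincGamma_div_Gamma hs hv.le
  · rw [div_le_iff₀ hvs, inv_mul_eq_div]
    exact lincGamma_div_Gamma_le hs hv.le

end IncompleteGamma

lemma Gamma_le_Gamma_add_natCast {x : ℝ} (hx : 1 ≤ x) (n : ℕ) :
    Real.Gamma x ≤ Real.Gamma (x + n) := by
  induction n with
  | zero => simp
  | succ n ih =>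
    have one_le : 1 ≤ x + n := le_add_of_le_of_nonneg hx n.cast_nonneg
    rw [Nat.cast_succ, ← add_assoc, Real.Gamma_add_one (by positivity)]
    exact ih.trans (le_mul_of_one_le_left (Real.Gamma_pos_of_pos (by positivity)).le one_le)

section Mixture

variable {s v : ℝ}

/-- The distribution function, at `v ≥ 0`, of the noncentral gamma law with shape `s` and
noncentrality `ξ`: the mixture of the unit-rate gamma laws of shape `s + i` with Poisson weights
`e^{-ξ} ξ ^ i / i!`. The HARQ-CC outage probability is its value at `(2 ^ R - 1) / (ρ * b)`, with
`s = L`. -/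
noncomputable def noncentralGammaCDF (s ξ v : ℝ) : ℝ :=
  Real.exp (-ξ) * ∑' i : ℕ, ξ ^ i / (Nat.factorial i) *
    (lincGamma (s + i) v / Real.Gamma (s + i))

lemma lincGamma_add_natCast_div_Gamma_div_rpow_le (hs : 0 < s) (hv : 0 < v) (hv1 : v ≤ 1)
    (i : ℕ) :
    lincGamma (s + i) v / Real.Gamma (s + i) / v ^ s ≤ (Real.Gamma (s + 1))⁻¹ := by
  have hsi : 0 < s + i := by positivity
  rw [div_le_iff₀ (Real.rpow_pos_of_pos hv s), inv_mul_eq_div]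
  calc lincGamma (s + i) v / Real.Gamma (s + i)
      ≤ v ^ (s + i) / Real.Gamma (s + i + 1) := lincGamma_div_Gamma_le hsi hv.le
    _ ≤ v ^ s / Real.Gamma (s + 1) := by
      refine div_le_div₀ (Real.rpow_nonneg hv.le s) ?_ (Real.Gamma_pos_of_pos (by positivity)) ?_
      · exact Real.rpow_le_rpow_of_exponent_ge hv hv1 (le_add_of_nonneg_right i.cast_nonneg)
      · rw [add_right_comm]
        exact Gamma_le_Gamma_add_natCast (le_add_of_nonneg_left hs.le) i

lemma tendsto_lincGamma_add_natCast_div_Gamma_div_rpow (hs : 0 < s) (i : ℕ) :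
    Tendsto (fun v => lincGamma (s + i) v / Real.Gamma (s + i) / v ^ s) (𝓝[>] 0)
      (𝓝 ((Real.Gamma (s + i + 1))⁻¹ * 0 ^ i)) := by
  have pow_limit : Tendsto (fun v : ℝ => v ^ i) (𝓝[>] 0) (𝓝 (0 ^ i)) :=
    tendsto_nhdsWithin_of_tendsto_nhds ((continuous_pow i).tendsto 0)
  refine ((tendsto_lincGamma_div_Gamma_div_rpow (by positivity)).mul pow_limit).congr' ?_
  filter_upwards [self_mem_nhdsWithin] with v (hv : 0 < v)
  rw [Real.rpow_add_natCast hv.ne', ← div_div, div_mul_cancel₀ _ (pow_pos hv i).ne']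

lemma tendsto_noncentralGammaCDF_div_rpow (hs : 0 < s) (ξ : ℝ) :
    Tendsto (fun v => noncentralGammaCDF s ξ v / v ^ s) (𝓝[>] 0)
      (𝓝 (Real.exp (-ξ) * (Real.Gamma (s + 1))⁻¹)) := by
  have bound_summable :
      Summable fun i : ℕ => |ξ| ^ i / (Nat.factorial i) * (Real.Gamma (s + 1))⁻¹ :=
    (Real.summable_pow_div_factorial |ξ|).mul_right _
  have series_limit := tendsto_tsum_of_dominated_convergence (𝓕 := 𝓝[>] 0) bound_summable
    (fun i => (tendsto_lincGamma_add_natCast_div_Gamma_div_rpow hs i).const_mul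
      (ξ ^ i / (Nat.factorial i))) <| by
    filter_upwards [Ioc_mem_nhdsGT one_pos] with v ⟨hv, hv1⟩ i
    have hsi : 0 < s + i := by positivity
    have ratio_nonneg : 0 ≤ lincGamma (s + i) v / Real.Gamma (s + i) / v ^ s :=
      div_nonneg (div_nonneg (lincGamma_nonneg hv.le) (Real.Gamma_pos_of_pos hsi).le)
        (Real.rpow_nonneg hv.le s)
    rw [norm_mul, Real.norm_of_nonneg ratio_nonneg, norm_div, norm_pow, Real.norm_eq_abs,
      RCLike.norm_natCast]
    exact mul_le_mul_of_nonneg_left (lincGamma_add_natCast_div_Gamma_div_rpow_le hs hv hv1 i)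
      (by positivity)
  rw [tsum_eq_single 0 fun i hi => by simp only [zero_pow hi, mul_zero]] at series_limit
  convert series_limit.const_mul (Real.exp (-ξ)) using 2 with v
  · simp only [noncentralGammaCDF, mul_div_assoc, ← tsum_div_const]
  · simp

end Mixture

lemma tendsto_neg_log_div_log_of_tendsto_mul_rpow {f : ℝ → ℝ} {d C : ℝ} (hC : C ≠ 0)
    (hf : Tendsto (fun ρ => f ρ * ρ ^ d) atTop (𝓝 C)) :
    Tendsto (fun ρ => -Real.log (f ρ) / Real.log ρ) atTop (𝓝 d) := by
  have log_ratio_limit :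
      Tendsto (fun ρ => d - Real.log (f ρ * ρ ^ d) / Real.log ρ) atTop (𝓝 d) := by
    simpa only [sub_zero] using
      ((hf.log hC).div_atTop Real.tendsto_log_atTop).const_sub d
  refine log_ratio_limit.congr' ?_
  filter_upwards [hf.eventually_ne hC, eventually_gt_atTop 1] with ρ hfρ hρ
  have log_pos : 0 < Real.log ρ := Real.log_pos hρ
  rw [Real.log_mul (left_ne_zero_of_mul hfρ) (right_ne_zero_of_mul hfρ),
    Real.log_rpow (one_pos.trans hρ)]
  field_simp
  ring

theorem harqCC_diversity_order_general {b R s : ℝ} (hb : 0 < b) (hR : 0 < R) (hs : 0 < s)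
    (ξ : ℝ) :
    Tendsto (fun ρ : ℝ =>
      -Real.log (noncentralGammaCDF s ξ (((2 : ℝ) ^ R - 1) / (ρ * b))) / Real.log ρ)
      atTop (𝓝 s) := by
  set c : ℝ := ((2 : ℝ) ^ R - 1) / b
  have hc : 0 < c := div_pos (sub_pos.mpr (Real.one_lt_rpow one_lt_two hR)) hb
  have arg_limit : Tendsto (fun ρ => c / ρ) atTop (𝓝[>] 0) :=
    tendsto_nhdsWithin_iff.mpr ⟨tendsto_const_nhds.div_atTop tendsto_id,
      (eventually_gt_atTop 0).mono fun ρ hρ => div_pos hc hρ⟩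
  have hC : Real.exp (-ξ) * (Real.Gamma (s + 1))⁻¹ * c ^ s ≠ 0 := by
    have := Real.Gamma_pos_of_pos (add_pos hs one_pos)
    positivity
  refine tendsto_neg_log_div_log_of_tendsto_mul_rpow hC
    ((((tendsto_noncentralGammaCDF_div_rpow hs ξ).comp arg_limit).mul_const (c ^ s)).congr' ?_)
  filter_upwards [eventually_gt_atTop 0] with ρ hρ
  have arg_eq : ((2 : ℝ) ^ R - 1) / (ρ * b) = c / ρ := by rw [mul_comm, ← div_div]
  rw [Function.comp_apply, arg_eq, Real.div_rpow hc.le hρ.le]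
  field_simp

/-- The HARQ-CC scheme achieves full diversity order `L`: with outage probability
`P(ρ) = e^{-ξ} ∑_{i=0}^∞ (ξ^i/i!) γ(L+i, (2^R−1)/(ρb))/Γ(L+i)`,
one has `−log P(ρ)/log ρ → L` as `ρ → ∞`. -/
theorem harqCC_diversity_order (ξ b R : ℝ) (hξ : 0 ≤ ξ) (hb : 0 < b) (hR : 0 < R)
    (L : ℕ) (hL : 1 ≤ L)
    (P : ℝ → ℝ)
    (hP : ∀ ρ, 0 < ρ → P ρ = Real.exp (-ξ) *
      ∑' i : ℕ, ξ ^ i / (Nat.factorial i) *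
        (lincGamma (L + i) (((2 : ℝ) ^ R - 1) / (ρ * b)) / Real.Gamma (L + i))) :
    Tendsto (fun ρ : ℝ => -Real.log (P ρ) / Real.log ρ) atTop (nhds (L : ℝ)) := by
  refine (harqCC_diversity_order_general hb hR (Nat.cast_pos.mpr hL) ξ).congr' ?_
  filter_upwards [eventually_gt_atTop 0] with ρ hρ using by rw [hP ρ hρ, noncentralGammaCDF]
end
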